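/- Let d₁, d₂, m ≥ 1 and n = d₁ + d₂ + m; write points of ℝⁿ as x = (x′, x″, x‴) ∈ ℝ^{d₁} × ℝ^{d₂} × ℝ^{m}. Suppose y, ν, ω ∈ ℝⁿ and ȳ, ν̄, ω̄ ∈ ℝⁿ satisfy: y′ = 0; ν = (ν′, 0, 0) with ν ≠ 0; |ω| = 1 and ν·ω ≠ 0; ȳ′ = 0 and ȳ″ = 0; ν̄ = (ν̄′, ν̄″, 0) with ν̄ ≠ 0; |ω̄| = 1 and ν̄·ω̄ ≠ 0; and let r, r̄ ∈ ℝ. Set σ = |ν|²/(2ν·ω) and σ̄ = |ν̄|²/(2ν̄·ω̄). If (y − r(ν − σω), y·ω + r, ω, ν − σω, σ, −σ(y − (y·ω)ω)) = (ȳ − r̄(ν̄ − σ̄ω̄), ȳ·ω̄ + r̄, ω̄, ν̄ − σ̄ω̄, σ̄, −σ̄(ȳ − (ȳ·ω̄)ω̄)), then ω = ω̄, σ = σ̄, ν = ν̄ (in particular the ℝ^{d₂}-component of ν̄ vanishes), y = ȳ (in particular the ℝ^{d₂}-component of y vanishes), and r = r̄. -/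

import Mathlib

open scoped RealInnerProductSpace

/-!
Since `σ ≠ 0`, the spherical component determines `y` up to a multiple of `ω`, as
`y - ⟪y, ω⟫ • ω`. The ray is not tangential, so `ω` does not lie in `S₁`, and two points of `S₁`
that differ by a multiple of `ω` are equal. Then `r` is read off from the time component.
-/

theorem eq_of_sub_smul_eq_sub_smul_of_notMem {K E : Type*} [DivisionRing K] [AddCommGroup E]
    [Module K E] {S : Submodule K E} {ω y z : E} {a b : K} (hω : ω ∉ S) (hy : y ∈ S) (hz : z ∈ S)
    (h : y - a • ω = z - b • ω) : y = z := by
  have hdiff : y - z = (a - b) • ω := by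
    rw [sub_smul, sub_eq_sub_iff_sub_eq_sub.mp h]
  have hab : a = b := by
    by_contra hne
    exact hω ((S.smul_mem_iff (sub_ne_zero.mpr hne)).mp (hdiff ▸ S.sub_mem hy hz))
  subst hab
  exact sub_left_injective h

section CoordinateSubspace

variable {𝕜 ι : Type*} [RCLike 𝕜]

variable (𝕜) in
/-- The coordinate subspace of vectors whose coordinates indexed by `s` vanish. The strata `S₁` and
`S₂` of the flat model are of this form, and the conormal directions form the orthogonal
complement. -/
def vanishingOn (s : Set ι) : Submodule 𝕜 (EuclideanSpace 𝕜 ι) where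
  carrier := {x | ∀ i ∈ s, x i = 0}
  zero_mem' _ _ := rfl
  add_mem' hx hy i hi := by simp [hx i hi, hy i hi]
  smul_mem' c x hx i hi := by simp [hx i hi]

theorem mem_vanishingOn {s : Set ι} {x : EuclideanSpace 𝕜 ι} :
    x ∈ vanishingOn 𝕜 s ↔ ∀ i ∈ s, x i = 0 :=
  Iff.rfl

theorem vanishingOn_antitone : Antitone (vanishingOn 𝕜 (ι := ι)) :=
  fun _ _ hst _ hx i hi ↦ hx i (hst hi)

theorem mem_orthogonal_vanishingOn [Fintype ι] {s : Set ι} {x : EuclideanSpace 𝕜 ι} :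
    x ∈ (vanishingOn 𝕜 s)ᗮ ↔ ∀ i ∉ s, x i = 0 := by
  classical
  refine ⟨fun hx i hi ↦ ?_, fun hx y hy ↦ ?_⟩
  · have hsingle : EuclideanSpace.single i (1 : 𝕜) ∈ vanishingOn 𝕜 s :=
      mem_vanishingOn.mpr fun j hj ↦ by simp [ne_of_mem_of_not_mem hj hi]
    simpa [EuclideanSpace.inner_single_left] using hx _ hsingle
  · rw [PiLp.inner_apply]
    refine Finset.sum_eq_zero fun i _ ↦ ?_
    by_cases hi : i ∈ s
    · simp [hy i hi]
    · simp [hx i hi]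

end CoordinateSubspace

section Flowout

variable {E : Type*} [NormedAddCommGroup E] [InnerProductSpace ℝ E]

/-- The dual time variable `σ` of the flowout: for a unit vector `ω` with `⟪ν, ω⟫ ≠ 0`, it is the
solution of `‖ν - σ • ω‖ ^ 2 = σ ^ 2`, which makes the covector `(ν - σ • ω, σ)` characteristic for
the wave operator. On tangential rays, where `⟪ν, ω⟫ = 0`, the value is the junk value `0`. -/
noncomputable def flowoutFrequency (ν ω : E) : ℝ :=
  ‖ν‖ ^ 2 / (2 * ⟪ν, ω⟫)

theorem flowoutFrequency_ne_zero {ν ω : E} (hνω : ⟪ν, ω⟫ ≠ 0) : flowoutFrequency ν ω ≠ 0 := by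
  have hν : ν ≠ 0 := fun h ↦ hνω (by rw [h, inner_zero_left])
  exact div_ne_zero (pow_ne_zero 2 (norm_ne_zero_iff.mpr hν)) (mul_ne_zero two_ne_zero hνω)

theorem stmt3_general {S₁ S₂ : Submodule ℝ E} (hS : S₂ ≤ S₁) {y ν ω ybar νbar ωbar : E}
    {r rbar : ℝ} (hy : y ∈ S₁) (hν : ν ∈ S₁ᗮ) (hνω : ⟪ν, ω⟫ ≠ 0) (hybar : ybar ∈ S₂)
    (htime : ⟪y, ω⟫ + r = ⟪ybar, ωbar⟫ + rbar)
    (hdir : ω = ωbar)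
    (hcov : ν - flowoutFrequency ν ω • ω = νbar - flowoutFrequency νbar ωbar • ωbar)
    (hfreq : flowoutFrequency ν ω = flowoutFrequency νbar ωbar)
    (hsph : (-flowoutFrequency ν ω) • (y - ⟪y, ω⟫ • ω) =
      (-flowoutFrequency νbar ωbar) • (ybar - ⟪ybar, ωbar⟫ • ωbar)) :
    ω = ωbar ∧ flowoutFrequency ν ω = flowoutFrequency νbar ωbar ∧ ν = νbar ∧ y = ybar ∧
      r = rbar ∧ νbar ∈ S₁ᗮ ∧ y ∈ S₂ := by
  subst hdir
  have hνeq : ν = νbar := by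
    rw [← hfreq] at hcov
    exact sub_left_injective hcov
  subst hνeq
  have hω : ω ∉ S₁ := fun h ↦ hνω (S₁.inner_left_of_mem_orthogonal h hν)
  have hproj : y - ⟪y, ω⟫ • ω = ybar - ⟪ybar, ω⟫ • ω :=
    smul_right_injective E (neg_ne_zero.mpr (flowoutFrequency_ne_zero hνω)) hsph
  obtain rfl : y = ybar := eq_of_sub_smul_eq_sub_smul_of_notMem hω hy (hS hybar) hproj
  exact ⟨rfl, rfl, rfl, rfl, add_left_cancel htime, hν, hybar⟩

end Flowout

/-- In the flat nested model, a point of the flowout Lagrangian `Λ^a_{1+}` can equal a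
point of `Λ^c_{2+}` only when all the parameters coincide. -/
theorem stmt3 (d₁ d₂ m : ℕ) (hd₁ : 1 ≤ d₁) (hd₂ : 1 ≤ d₂) (hm : 1 ≤ m)
    (n : ℕ) (hn : n = d₁ + d₂ + m)
    (y ν ω ybar νbar ωbar : EuclideanSpace ℝ (Fin n))
    (hy : ∀ i : Fin n, (i : ℕ) < d₁ → y i = 0)
    (hν : ∀ i : Fin n, d₁ ≤ (i : ℕ) → ν i = 0)
    (hνne : ν ≠ 0)
    (hω : ‖ω‖ = 1) (hνω : ⟪ν, ω⟫ ≠ 0)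
    (hybar : ∀ i : Fin n, (i : ℕ) < d₁ + d₂ → ybar i = 0)
    (hνbar : ∀ i : Fin n, d₁ + d₂ ≤ (i : ℕ) → νbar i = 0)
    (hνbarne : νbar ≠ 0)
    (hωbar : ‖ωbar‖ = 1) (hνωbar : ⟪νbar, ωbar⟫ ≠ 0)
    (r rbar σ σbar : ℝ)
    (hσ : σ = ‖ν‖ ^ 2 / (2 * ⟪ν, ω⟫))
    (hσbar : σbar = ‖νbar‖ ^ 2 / (2 * ⟪νbar, ωbar⟫))
    (h1 : y - r • (ν - σ • ω) = ybar - rbar • (νbar - σbar • ωbar))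
    (h2 : ⟪y, ω⟫ + r = ⟪ybar, ωbar⟫ + rbar)
    (h3 : ω = ωbar)
    (h4 : ν - σ • ω = νbar - σbar • ωbar)
    (h5 : σ = σbar)
    (h6 : (-σ) • (y - ⟪y, ω⟫ • ω) = (-σbar) • (ybar - ⟪ybar, ωbar⟫ • ωbar)) :
    ω = ωbar ∧ σ = σbar ∧ ν = νbar ∧ y = ybar ∧ r = rbar ∧
    (∀ i : Fin n, d₁ ≤ (i : ℕ) → νbar i = 0) ∧
    (∀ i : Fin n, (i : ℕ) < d₁ + d₂ → y i = 0) := by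
  subst hσ hσbar
  have hS : vanishingOn ℝ {i : Fin n | (i : ℕ) < d₁ + d₂} ≤
      vanishingOn ℝ {i : Fin n | (i : ℕ) < d₁} :=
    vanishingOn_antitone fun i (hi : (i : ℕ) < d₁) ↦ Nat.lt_add_right d₂ hi
  simpa only [flowoutFrequency, mem_vanishingOn, mem_orthogonal_vanishingOn, Set.mem_ofPred_eq,
    not_lt] using stmt3_general hS hy
      (mem_orthogonal_vanishingOn.mpr fun i hi ↦ hν i (not_lt.mp hi)) hνω hybar h2 h3 h4 h5 h6
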